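/- arXiv:1507.00369 — 2 statements merged into one kernel-verified Lean document; each statement's English description precedes it below -/
import Mathlib

section
/- Every natural number N can be written as the sum of three terms of the sequence (⌊n²/7⌋)_{n∈ℕ}, i.e., there exist natural numbers A, B, C with N = ⌊A²/7⌋ + ⌊B²/7⌋ + ⌊C²/7⌋. -/
/-!
A positive definite integral matrix of size `m` and determinant `d` has, in a suitable basis, a top
left entry of at most `(4/3) ^ ((m - 1) / 2) * d ^ (1 / m)` (Hermite). For `d = 1` and `m ≤ 5` this
is less than `2`, so the entry is `1`; splitting off a square and repeating, one sees that the
matrix is `Uᵀ * U` with `U` integral. In particular the diagonal entries are sums of three squares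
if `m = 3`. The matrix `!![a, k, 1; k, b * n - 1, 0; 1, 0, n]` is positive definite of determinant
`1` whenever `k ^ 2 + b = (b * n - 1) * a` with `b` and `b * n - 1` positive. If `n` is `1` or `2`
modulo `4`, Dirichlet's theorem provides `b` with `b * n - 1` equal to twice a prime or to a prime,
and quadratic reciprocity then shows that `-b` is a square modulo `b * n - 1`.

One of `7 * N + 4` and `7 * N + 6` is `1` or `2` modulo `4`, hence of the form
`A ^ 2 + B ^ 2 + C ^ 2`. Squares are `0`, `1`, `2` or `4` modulo `7`, so the three remainders sum
to exactly `4`, respectively `6`, and the three quotients to `N`.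
-/

open Matrix NumberTheorySymbols

section PivotCondensation

variable {R : Type*} [CommRing R] {n : ℕ}

/-- Chio condensation of `M` along its top left entry: the matrix of the `2 × 2` minors of `M`
containing that entry. It is the Schur complement of `M 0 0`, scaled by `M 0 0` so that no division
occurs. -/
def pivotCondensation (M : Matrix (Fin (n + 1)) (Fin (n + 1)) R) : Matrix (Fin n) (Fin n) R :=
  M 0 0 • M.submatrix Fin.succ Fin.succ - vecMulVec (vecTail (Mᵀ 0)) (vecTail (M 0))

/-- The block upper triangular matrix `!![a, b; 0, U]`, used to lift a change of basis, or a
factorization, of the pivot condensation of a matrix to the matrix itself. -/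
def bordered (a : R) (b : Fin n → R) (U : Matrix (Fin n) (Fin n) R) :
    Matrix (Fin (n + 1)) (Fin (n + 1)) R :=
  of (vecCons (vecCons a b) fun i ↦ vecCons 0 (U i))

theorem det_bordered (a : R) (b : Fin n → R) (U : Matrix (Fin n) (Fin n) R) :
    (bordered a b U).det = a * U.det := by
  have hsub : (bordered a b U).submatrix (Fin.succAbove 0) Fin.succ = U := by ext; rfl
  rw [det_succ_column_zero, Fin.sum_univ_succ, hsub]
  simp [bordered]

theorem mul_det_pivotCondensation (M : Matrix (Fin (n + 1)) (Fin (n + 1)) R) :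
    M 0 0 * (pivotCondensation M).det = M 0 0 ^ n * M.det := by
  have hmul : (M * bordered 1 (-vecTail (M 0)) (M 0 0 • 1))ᵀ =
      bordered (M 0 0) (vecTail (Mᵀ 0)) (pivotCondensation M)ᵀ := by
    ext i j
    refine Fin.cases ?_ (fun i ↦ ?_) i <;> refine Fin.cases ?_ (fun j ↦ ?_) j <;>
      simp [bordered, pivotCondensation, mul_apply, Fin.sum_univ_succ, one_apply, vecTail,
        vecMulVec_apply] <;> ring
  have hdet := congrArg det hmul
  simp only [det_transpose, det_mul, det_bordered, det_smul, Fintype.card_fin, det_one] at hdet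
  rw [← hdet]
  ring

theorem mulVec_apply_zero (M : Matrix (Fin (n + 1)) (Fin (n + 1)) R) (x : Fin (n + 1) → R) :
    (M *ᵥ x) 0 = M 0 0 * x 0 + vecTail (M 0) ⬝ᵥ vecTail x :=
  Fin.sum_univ_succ _

theorem mul_dotProduct_mulVec_eq_add (M : Matrix (Fin (n + 1)) (Fin (n + 1)) R)
    (x : Fin (n + 1) → R) :
    M 0 0 * (x ⬝ᵥ M *ᵥ x) =
      (x ᵥ* M) 0 * (M *ᵥ x) 0 + vecTail x ⬝ᵥ pivotCondensation M *ᵥ vecTail x := by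
  have hcol : (x ᵥ* M) 0 = x 0 * M 0 0 + vecTail x ⬝ᵥ vecTail (Mᵀ 0) := Fin.sum_univ_succ _
  have htail : vecTail (M *ᵥ x) =
      x 0 • vecTail (Mᵀ 0) + M.submatrix Fin.succ Fin.succ *ᵥ vecTail x := by
    ext i
    simp [vecTail, mulVec, dotProduct, Fin.sum_univ_succ, mul_comm]
  have hform : x ⬝ᵥ M *ᵥ x = x 0 * (M *ᵥ x) 0 + vecTail x ⬝ᵥ vecTail (M *ᵥ x) :=
    Fin.sum_univ_succ _
  simp only [pivotCondensation, hform, htail, mulVec_apply_zero, hcol, sub_mulVec, smul_mulVec,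
    vecMulVec_mulVec, dotProduct_add, dotProduct_sub, dotProduct_smul, smul_eq_mul,
    MulOpposite.smul_eq_mul_unop, MulOpposite.unop_op]
  ring

theorem isSymm_pivotCondensation {M : Matrix (Fin (n + 1)) (Fin (n + 1)) R} (hM : M.IsSymm) :
    (pivotCondensation M).IsSymm := by
  simp only [IsSymm, pivotCondensation, transpose_sub, transpose_smul, transpose_submatrix,
    transpose_vecMulVec, hM.eq]

theorem mul_dotProduct_mulVec_eq_sq_add {M : Matrix (Fin (n + 1)) (Fin (n + 1)) R}
    (hM : M.IsSymm) (x : Fin (n + 1) → R) :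
    M 0 0 * (x ⬝ᵥ M *ᵥ x) =
      (M *ᵥ x) 0 ^ 2 + vecTail x ⬝ᵥ pivotCondensation M *ᵥ vecTail x := by
  rw [mul_dotProduct_mulVec_eq_add, ← mulVec_transpose, hM.eq, sq]

end PivotCondensation

section PosDef

variable {R : Type*} [CommRing R] [LinearOrder R] [IsStrictOrderedRing R] [StarRing R]
  [TrivialStar R] {n : ℕ} {M : Matrix (Fin (n + 1)) (Fin (n + 1)) R}

theorem posDef_pivotCondensation (hM : M.PosDef) : (pivotCondensation M).PosDef := by
  have hsymm : M.IsSymm := isHermitian_iff_isSymm.1 hM.isHermitian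
  have ha : 0 < M 0 0 := hM.diag_pos
  refine .of_dotProduct_mulVec_pos
    (isHermitian_iff_isSymm.2 (isSymm_pivotCondensation hsymm)) fun y hy ↦ ?_
  let x : Fin (n + 1) → R := vecCons (-(vecTail (M 0) ⬝ᵥ y)) (M 0 0 • y)
  have htail : vecTail x = M 0 0 • y := rfl
  have hx : x ≠ 0 := fun h ↦
    hy ((smul_eq_zero.1 (htail.symm.trans (congrArg vecTail h))).resolve_left ha.ne')
  have horth : (M *ᵥ x) 0 = 0 := by
    rw [mulVec_apply_zero, htail, dotProduct_smul]
    simp [x]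
  have hpos : 0 < M 0 0 * (x ⬝ᵥ M *ᵥ x) :=
    mul_pos ha (by simpa only [star_trivial] using hM.dotProduct_mulVec_pos hx)
  rw [mul_dotProduct_mulVec_eq_sq_add hsymm, horth, htail, mulVec_smul, dotProduct_smul,
    smul_dotProduct, smul_eq_mul, smul_eq_mul, sq, zero_mul, zero_add, mul_pos_iff_of_pos_left ha,
    mul_pos_iff_of_pos_left ha] at hpos
  rwa [star_trivial]

end PosDef

section BaseChange

variable {ι R : Type*} [Fintype ι] [CommRing R]

theorem transpose_mul_mul_same_apply (M P : Matrix ι ι R) (i j : ι) :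
    (Pᵀ * M * P) i j = P.col i ⬝ᵥ M *ᵥ P.col j := by
  rw [Matrix.mul_assoc]
  rfl

variable [DecidableEq ι]

theorem det_transpose_mul_mul_same (M : Matrix ι ι R) {P : Matrix ι ι R} (hP : P.det = 1) :
    (Pᵀ * M * P).det = M.det := by
  simp [hP]

theorem posDef_transpose_mul_mul_same [PartialOrder R] [StarRing R] [TrivialStar R]
    {M P : Matrix ι ι R} (hM : M.PosDef) (hP : P.det = 1) : (Pᵀ * M * P).PosDef := by
  rw [← conjTranspose_eq_transpose_of_trivial]
  refine hM.conjTranspose_mul_mul_same (mulVec_injective_of_isUnit ?_)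
  simp [isUnit_iff_isUnit_det, hP]

theorem exists_forall_transpose_mul_mul_same_apply_le {M : Matrix ι ι ℤ} (hM : M.PosDef) (i : ι) :
    ∃ P : Matrix ι ι ℤ, P.det = 1 ∧
      ∀ Q : Matrix ι ι ℤ, Q.det = 1 → (Pᵀ * M * P) i i ≤ (Qᵀ * M * Q) i i := by
  let value (P : {P : Matrix ι ι ℤ // P.det = 1}) : ℕ := ((P.1ᵀ * M * P.1) i i).toNat
  have : Nonempty {P : Matrix ι ι ℤ // P.det = 1} := ⟨1, det_one⟩
  refine ⟨(Function.argmin value).1, (Function.argmin value).2, fun Q hQ ↦ ?_⟩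
  have hle : value (Function.argmin value) ≤ value ⟨Q, hQ⟩ := Function.argmin_le value _
  have hpos : 0 < (Qᵀ * M * Q) i i := (posDef_transpose_mul_mul_same hM hQ).diag_pos
  lia

theorem exists_det_eq_one_col_zero_eq_vecCons {n : ℕ} (t : R)
    {Q : Matrix (Fin (n + 1)) (Fin (n + 1)) R} (hQ : Q.det = 1) :
    ∃ P : Matrix (Fin (n + 2)) (Fin (n + 2)) R, P.det = 1 ∧ P.col 0 = vecCons t (Q.col 0) := by
  -- On the first two columns: `(1, 0), (0, q) ↦ (1, 0), (t - 1, q) ↦ (t, q), (t - 1, q)`.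
  refine ⟨bordered 1 0 Q * transvection 0 1 (t - 1) * transvection 1 0 1, ?_, ?_⟩
  · simp [det_bordered, det_transvection_of_ne, hQ]
  · ext i
    simp only [col_apply, mul_transvection_apply_same]
    refine Fin.cases ?_ (fun i ↦ ?_) i <;> simp [bordered]

end BaseChange

theorem exists_four_mul_add_sq_le_sq (a s : ℤ) (ha : 0 < a) : ∃ t, 4 * (a * t + s) ^ 2 ≤ a ^ 2 := by
  have hdiv := Int.mul_ediv_add_emod (2 * s + a) (2 * a)
  have hnonneg := Int.emod_nonneg (2 * s + a) (b := 2 * a) (by positivity)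
  have hlt := Int.emod_lt_of_pos (2 * s + a) (b := 2 * a) (by positivity)
  refine ⟨-((2 * s + a) / (2 * a)), ?_⟩
  nlinarith

section Hermite

variable {n : ℕ}

theorem three_mul_sq_le_four_mul_pivotCondensation_of_forall_le
    {M : Matrix (Fin (n + 2)) (Fin (n + 2)) ℤ} (hM : M.PosDef)
    (hmin : ∀ P : Matrix (Fin (n + 2)) (Fin (n + 2)) ℤ, P.det = 1 → M 0 0 ≤ (Pᵀ * M * P) 0 0)
    {Q : Matrix (Fin (n + 1)) (Fin (n + 1)) ℤ} (hQ : Q.det = 1) :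
    3 * M 0 0 ^ 2 ≤ 4 * (Qᵀ * pivotCondensation M * Q) 0 0 := by
  have ha : 0 < M 0 0 := hM.diag_pos
  obtain ⟨t, ht⟩ := exists_four_mul_add_sq_le_sq (M 0 0) (vecTail (M 0) ⬝ᵥ Q.col 0) ha
  obtain ⟨P, hPdet, hP⟩ := exists_det_eq_one_col_zero_eq_vecCons t hQ
  have hsq : M 0 0 * (Pᵀ * M * P) 0 0 =
      (M 0 0 * t + vecTail (M 0) ⬝ᵥ Q.col 0) ^ 2 + (Qᵀ * pivotCondensation M * Q) 0 0 := by
    rw [transpose_mul_mul_same_apply, transpose_mul_mul_same_apply, hP,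
      mul_dotProduct_mulVec_eq_sq_add (isHermitian_iff_isSymm.1 hM.isHermitian), mulVec_apply_zero,
      tail_cons, cons_val_zero]
  have hle := mul_le_mul_of_nonneg_left (hmin P hPdet) ha.le
  linarith

theorem exists_det_eq_one_hermite_bound {M : Matrix (Fin (n + 1)) (Fin (n + 1)) ℤ}
    (hM : M.PosDef) :
    ∃ P : Matrix (Fin (n + 1)) (Fin (n + 1)) ℤ, P.det = 1 ∧
      3 ^ (n + 1).choose 2 * (Pᵀ * M * P) 0 0 ^ (n + 1) ≤ 4 ^ (n + 1).choose 2 * M.det := by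
  induction n with
  | zero => exact ⟨1, by simp⟩
  | succ n ih =>
    obtain ⟨P, hP, hmin⟩ := exists_forall_transpose_mul_mul_same_apply_le hM 0
    refine ⟨P, hP, ?_⟩
    rw [← det_transpose_mul_mul_same M hP]
    set A := Pᵀ * M * P with hA
    have hApos : A.PosDef := posDef_transpose_mul_mul_same hM hP
    have ha : 0 < A 0 0 := hApos.diag_pos
    obtain ⟨Q, hQ, hbound⟩ := ih (posDef_pivotCondensation hApos)
    set g := (Qᵀ * pivotCondensation A * Q) 0 0
    have hAmin (R : Matrix (Fin (n + 2)) (Fin (n + 2)) ℤ) (hR : R.det = 1) :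
        A 0 0 ≤ (Rᵀ * A * R) 0 0 := by
      simpa [hA, Matrix.mul_assoc] using hmin (P * R) (by simp [hP, hR])
    have hstep : 3 * A 0 0 ^ 2 ≤ 4 * g :=
      three_mul_sq_le_four_mul_pivotCondensation_of_forall_le hApos hAmin hQ
    have hdet : (pivotCondensation A).det = A 0 0 ^ n * A.det := by
      refine mul_left_cancel₀ ha.ne' ?_
      rw [mul_det_pivotCondensation]
      ring
    have hchoose : (n + 2).choose 2 = n + 1 + (n + 1).choose 2 := by
      simp [Nat.choose_succ_succ' (n + 1) 1]
    refine le_of_mul_le_mul_left ?_ (pow_pos ha n)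
    calc A 0 0 ^ n * (3 ^ (n + 2).choose 2 * A 0 0 ^ (n + 2))
        = 3 ^ (n + 1).choose 2 * (3 * A 0 0 ^ 2) ^ (n + 1) := by rw [hchoose]; ring
      _ ≤ 3 ^ (n + 1).choose 2 * (4 * g) ^ (n + 1) := by gcongr
      _ = 4 ^ (n + 1) * (3 ^ (n + 1).choose 2 * g ^ (n + 1)) := by ring
      _ ≤ 4 ^ (n + 1) * (4 ^ (n + 1).choose 2 * (A 0 0 ^ n * A.det)) := by rw [← hdet]; gcongr
      _ = A 0 0 ^ n * (4 ^ (n + 2).choose 2 * A.det) := by rw [hchoose]; ring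

theorem eq_transpose_bordered_mul_bordered {R : Type*} [CommRing R]
    {M : Matrix (Fin (n + 1)) (Fin (n + 1)) R} (hM : M.IsSymm) (h : M 0 0 = 1)
    {U : Matrix (Fin n) (Fin n) R} (hU : pivotCondensation M = Uᵀ * U) :
    M = (bordered 1 (vecTail (M 0)) U)ᵀ * bordered 1 (vecTail (M 0)) U := by
  ext i j
  refine Fin.cases ?_ (fun i ↦ ?_) i <;> refine Fin.cases ?_ (fun j ↦ ?_) j
  · simp [mul_apply, bordered, Fin.sum_univ_succ, h]
  · simp [mul_apply, bordered, Fin.sum_univ_succ, vecTail]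
  · simp [mul_apply, bordered, Fin.sum_univ_succ, vecTail, hM.apply]
  · have hsub : M i.succ j.succ = M 0 i.succ * M 0 j.succ + pivotCondensation M i j := by
      simp [pivotCondensation, h, vecMulVec_apply, vecTail, hM.apply]
    rw [hsub, hU]
    simp [mul_apply, bordered, Fin.sum_univ_succ, vecTail]

theorem exists_eq_transpose_mul_self {M : Matrix (Fin n) (Fin n) ℤ} (hn : n ≤ 5) (hM : M.PosDef)
    (hdet : M.det = 1) : ∃ U : Matrix (Fin n) (Fin n) ℤ, M = Uᵀ * U := by
  induction n with
  | zero => exact ⟨0, Subsingleton.elim _ _⟩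
  | succ n ih =>
    obtain ⟨P, hP, hbound⟩ := exists_det_eq_one_hermite_bound hM
    set A := Pᵀ * M * P with hA
    have hApos : A.PosDef := posDef_transpose_mul_mul_same hM hP
    have hA1 : A 0 0 = 1 := by
      refine le_antisymm (not_lt.1 fun h2 ↦ hbound.not_gt ?_) hApos.diag_pos
      rw [hdet]
      calc (4 : ℤ) ^ (n + 1).choose 2 * 1 < 3 ^ (n + 1).choose 2 * 2 ^ (n + 1) := by
            have : n ≤ 4 := by omega
            interval_cases n <;> decide
        _ ≤ 3 ^ (n + 1).choose 2 * A 0 0 ^ (n + 1) := by gcongr; exact h2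
    have hdet_cond : (pivotCondensation A).det = 1 := by
      have hAdet : A.det = 1 := (det_transpose_mul_mul_same M hP).trans hdet
      simpa [hA1, hAdet] using mul_det_pivotCondensation A
    obtain ⟨U, hU⟩ := ih (by omega) (posDef_pivotCondensation hApos) hdet_cond
    obtain ⟨V, hV⟩ : ∃ V, A = Vᵀ * V := ⟨_, eq_transpose_bordered_mul_bordered
      (isHermitian_iff_isSymm.1 hApos.isHermitian) hA1 hU⟩
    have hPinv : P * P⁻¹ = 1 := mul_nonsing_inv P (by simp [hP])
    refine ⟨V * P⁻¹, ?_⟩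
    calc M = (P * P⁻¹)ᵀ * M * (P * P⁻¹) := by simp [hPinv]
      _ = (P⁻¹)ᵀ * A * P⁻¹ := by simp only [hA, transpose_mul, Matrix.mul_assoc]
      _ = (V * P⁻¹)ᵀ * (V * P⁻¹) := by simp only [hV, transpose_mul, Matrix.mul_assoc]

end Hermite

section ThreeSquares

theorem posDef_of_sq_add_eq_mul {a b k n : ℤ} (ha : 0 < a) (hb : 0 < b)
    (h : k ^ 2 + b = (b * n - 1) * a) : !![a, k, 1; k, b * n - 1, 0; 1, 0, n].PosDef := by
  set M := !![a, k, 1; k, b * n - 1, 0; 1, 0, n] with hM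
  refine .of_dotProduct_mulVec_pos (isHermitian_iff_isSymm.2 ?_) fun x hx ↦ ?_
  · ext i j
    fin_cases i <;> fin_cases j <;> rfl
  have hsq : a * b * (star x ⬝ᵥ M *ᵥ x) = b * (a * x 0 + k * x 1 + x 2) ^ 2 +
      ((b * x 1 - k * x 2) ^ 2 + a * x 2 ^ 2) := by
    simp only [hM, star_trivial, dotProduct, mulVec, Fin.sum_univ_three, of_apply, cons_val]
    linear_combination (-b * x 1 ^ 2 - x 2 ^ 2) * h
  contrapose! hx
  have hle := hsq.symm.trans_le (mul_nonpos_of_nonneg_of_nonpos (mul_pos ha hb).le hx)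
  have h2 : x 2 = 0 := by
    by_contra h2
    exact hle.not_gt (by positivity)
  have h1 : x 1 = 0 := by
    by_contra h1
    exact hle.not_gt (by simp only [h2, mul_zero, sub_zero]; positivity)
  have h0 : x 0 = 0 := by
    by_contra h0
    exact hle.not_gt (by simp only [h1, h2, mul_zero, add_zero]; positivity)
  ext i
  fin_cases i <;> assumption

theorem exists_eq_sum_three_sq_of_dvd {b n k : ℤ} (hb : 0 < b) (hm : 0 < b * n - 1)
    (h : b * n - 1 ∣ k ^ 2 + b) : ∃ u v w : ℤ, n = u ^ 2 + v ^ 2 + w ^ 2 := by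
  obtain ⟨a, ha⟩ := h
  have ha_pos : 0 < a := pos_of_mul_pos_right (ha ▸ by positivity) hm.le
  have hdet : det !![a, k, 1; k, b * n - 1, 0; 1, 0, n] = 1 := by
    simp only [det_fin_three, of_apply, cons_val]
    linear_combination -n * ha
  obtain ⟨U, hU⟩ := exists_eq_transpose_mul_self (by norm_num)
    (posDef_of_sq_add_eq_mul ha_pos hb ha) hdet
  refine ⟨U 0 2, U 1 2, U 2 2, ?_⟩
  simpa [mul_apply, Fin.sum_univ_three, sq] using congrFun₂ hU 2 2

theorem exists_dvd_sq_add_of_jacobiSym_neg_eq_one {p : ℕ} (hp : p.Prime) {b : ℤ}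
    (h : J(-b | p) = 1) : ∃ k : ℤ, (p : ℤ) ∣ k ^ 2 + b := by
  have : Fact p.Prime := ⟨hp⟩
  obtain ⟨r, hr⟩ := ZMod.isSquare_of_jacobiSym_eq_one h
  obtain ⟨k, rfl⟩ := ZMod.intCast_surjective r
  refine ⟨k, (ZMod.intCast_zmod_eq_zero_iff_dvd _ _).1 ?_⟩
  push_cast at hr ⊢
  linear_combination -hr

theorem exists_two_mul_dvd_sq_add {p b k : ℤ} (hp : Odd p) (hb : Odd b) (h : p ∣ k ^ 2 + b) :
    ∃ l : ℤ, 2 * p ∣ l ^ 2 + b := by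
  obtain ⟨l, hl, hpl⟩ : ∃ l : ℤ, Odd l ∧ p ∣ l ^ 2 + b := by
    rcases Int.even_or_odd k with hk | hk
    · refine ⟨k + p, hk.add_odd hp, ?_⟩
      rw [show (k + p) ^ 2 + b = k ^ 2 + b + p * (2 * k + p) by ring]
      exact dvd_add h (dvd_mul_right _ _)
    · exact ⟨k, hk, h⟩
  exact ⟨l, (Int.isCoprime_two_left.2 hp).mul_dvd (hl.pow.add_odd hb).two_dvd hpl⟩

theorem exists_prime_eq_mul_add {q r : ℕ} (hq : q ≠ 0) (h : r.Coprime q) :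
    ∃ p v : ℕ, p.Prime ∧ p = q * v + r := by
  obtain ⟨p, hrp, hp, hmod⟩ := Nat.forall_exists_prime_gt_and_modEq r hq h
  obtain ⟨v, hv⟩ := (Nat.modEq_iff_dvd' hrp.le).1 hmod.symm
  exact ⟨p, v, hp, by omega⟩

theorem jacobiSym_neg_of_one_mod_four {b p : ℕ} (hb : Odd b) (hp : p % 4 = 1) :
    J(-b | p) = J(p | b) := by
  have hp_odd : Odd p := Nat.odd_iff.2 (Nat.odd_of_mod_four_eq_one hp)
  rw [jacobiSym.neg _ hp_odd, ZMod.χ₄_nat_one_mod_four hp, one_mul,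
    jacobiSym.quadratic_reciprocity_one_mod_four' hb hp]

theorem jacobiSym_neg_of_three_mod_four {b p : ℕ} (hb : b % 4 = 3) (hp : Odd p) :
    J(-b | p) = J(p | b) := by
  rcases Nat.odd_mod_four_iff.1 (Nat.odd_iff.1 hp) with h | h
  · exact jacobiSym_neg_of_one_mod_four (Nat.odd_iff.2 (Nat.odd_of_mod_four_eq_three hb)) h
  · rw [jacobiSym.neg _ hp, ZMod.χ₄_nat_three_mod_four h,
      jacobiSym.quadratic_reciprocity_three_mod_four hb h, neg_one_mul, neg_neg]

theorem exists_eq_sum_three_sq_of_two_mod_four {n : ℕ} (hn : n % 4 = 2) :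
    ∃ u v w : ℤ, (n : ℤ) = u ^ 2 + v ^ 2 + w ^ 2 := by
  have hcop : (n - 1).Coprime (4 * n) := by
    refine .mul_right ?_ ((Nat.coprime_self_sub_left (by omega)).2 n.coprime_one_left)
    exact Nat.Coprime.pow_right 2 (Nat.coprime_two_right.2 (Nat.odd_iff.2 (by omega)))
  obtain ⟨p, v, hp, hpv⟩ := exists_prime_eq_mul_add (by omega) hcop
  have hbn : (4 * v + 1) * n = p + 1 := by
    have : (4 * v + 1) * n = 4 * n * v + n := by ring
    omega
  have hbn' : ((4 * v + 1 : ℕ) : ℤ) * n - 1 = p := sub_eq_of_eq_add (by exact_mod_cast hbn)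
  have hp4 : p % 4 = 1 := by rw [mul_assoc] at hpv; omega
  have hb : Odd (4 * v + 1) := ⟨2 * v, by ring⟩
  have hJ : J(-(4 * v + 1 : ℕ) | p) = 1 := by
    calc J(-(4 * v + 1 : ℕ) | p) = J(p | 4 * v + 1) := jacobiSym_neg_of_one_mod_four hb hp4
      _ = J(-1 | 4 * v + 1) :=
        jacobiSym.mod_left' (by rw [← hbn', sub_eq_neg_add, Int.add_mul_emod_self_left])
      _ = 1 := by rw [jacobiSym.at_neg_one hb, ZMod.χ₄_nat_one_mod_four (by omega)]
  obtain ⟨k, hk⟩ := exists_dvd_sq_add_of_jacobiSym_neg_eq_one hp hJ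
  exact exists_eq_sum_three_sq_of_dvd (by positivity) (by rw [hbn']; exact_mod_cast hp.pos)
    (hbn' ▸ hk)

theorem exists_eq_sum_three_sq_of_one_mod_four {n : ℕ} (hn : n % 4 = 1) :
    ∃ u v w : ℤ, (n : ℤ) = u ^ 2 + v ^ 2 + w ^ 2 := by
  obtain ⟨m, hm⟩ : ∃ m, 3 * n = 2 * m + 1 := ⟨(3 * n - 1) / 2, by omega⟩
  have hcop : m.Coprime (4 * n) := by
    refine .mul_right ?_ (.coprime_mul_left_right (k := 3) ?_)
    · exact Nat.Coprime.pow_right 2 (Nat.coprime_two_right.2 (Nat.odd_iff.2 (by omega)))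
    · simp [hm]
  obtain ⟨p, v, hp, hpv⟩ := exists_prime_eq_mul_add (by omega) hcop
  have hbn : (8 * v + 3) * n = 2 * p + 1 := by
    have : (8 * v + 3) * n = 2 * (4 * n * v) + 3 * n := by ring
    omega
  have hbn' : ((8 * v + 3 : ℕ) : ℤ) * n - 1 = 2 * p := sub_eq_of_eq_add (by exact_mod_cast hbn)
  have hp_odd : Odd p := Nat.odd_iff.2 (by rw [mul_assoc] at hpv; omega)
  have hb : Odd (8 * v + 3) := ⟨4 * v + 1, by ring⟩
  have hJ2 : J(-2 | 8 * v + 3) = 1 := by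
    rw [jacobiSym.at_neg_two hb, ZMod.χ₈'_nat_eq_if_mod_eight, if_neg (by omega), if_pos (by omega)]
  have hJ : J(-(8 * v + 3 : ℕ) | p) = 1 := by
    calc J(-(8 * v + 3 : ℕ) | p) = J(p | 8 * v + 3) :=
          jacobiSym_neg_of_three_mod_four (by omega) hp_odd
      _ = J(-2 * p | 8 * v + 3) := by rw [jacobiSym.mul_left, hJ2, one_mul]
      _ = J(1 | 8 * v + 3) := jacobiSym.mod_left' (by
        rw [neg_mul, ← hbn', neg_sub, sub_eq_add_neg, ← mul_neg, Int.add_mul_emod_self_left])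
      _ = 1 := jacobiSym.one_left _
  obtain ⟨k, hk⟩ := exists_dvd_sq_add_of_jacobiSym_neg_eq_one hp hJ
  obtain ⟨l, hl⟩ := exists_two_mul_dvd_sq_add (by exact_mod_cast hp_odd) (by exact_mod_cast hb) hk
  refine exists_eq_sum_three_sq_of_dvd (by positivity) ?_ (hbn' ▸ hl)
  rw [hbn']
  exact_mod_cast Nat.mul_pos two_pos hp.pos

theorem exists_eq_sum_three_sq_of_mod_four {n : ℕ} (hn : n % 4 = 1 ∨ n % 4 = 2) :
    ∃ u v w : ℕ, n = u ^ 2 + v ^ 2 + w ^ 2 := by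
  obtain ⟨u, v, w, h⟩ := hn.elim exists_eq_sum_three_sq_of_one_mod_four
    exists_eq_sum_three_sq_of_two_mod_four
  refine ⟨u.natAbs, v.natAbs, w.natAbs, ?_⟩
  zify
  simpa only [sq_abs] using h

end ThreeSquares

theorem sq_mod_seven (a : ℕ) :
    a ^ 2 % 7 = 0 ∨ a ^ 2 % 7 = 1 ∨ a ^ 2 % 7 = 2 ∨ a ^ 2 % 7 = 4 := by
  have ha : a % 7 < 7 := Nat.mod_lt _ (by norm_num)
  rw [Nat.pow_mod]
  interval_cases a % 7 <;> simp

theorem stmt_2 (N : ℕ) :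
    ∃ A B C : ℕ, N = A ^ 2 / 7 + B ^ 2 / 7 + C ^ 2 / 7 := by
  obtain ⟨r, hr, hmod⟩ : ∃ r, (r = 4 ∨ r = 6) ∧ ((7 * N + r) % 4 = 1 ∨ (7 * N + r) % 4 = 2) := by
    rcases lt_or_ge (N % 4) 2 with h | h
    · exact ⟨6, by omega, by omega⟩
    · exact ⟨4, by omega, by omega⟩
  obtain ⟨A, B, C, hsum⟩ := exists_eq_sum_three_sq_of_mod_four hmod
  refine ⟨A, B, C, ?_⟩
  have hA := sq_mod_seven A
  have hB := sq_mod_seven B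
  have hC := sq_mod_seven C
  omega
end

section
/- Every natural number N can be written as the sum of three terms of the sequence (⌊n²/40⌋)_{n∈ℕ}, i.e., there exist natural numbers A, B, C with N = ⌊A²/40⌋ + ⌊B²/40⌋ + ⌊C²/40⌋. -/
/-!
The squares modulo `40` are such that three residues whose sum is `27` modulo `40` have sum
exactly `27`. Hence a representation `40 * N + 27 = A ^ 2 + B ^ 2 + C ^ 2` gives
`N = ⌊A ^ 2 / 40⌋ + ⌊B ^ 2 / 40⌋ + ⌊C ^ 2 / 40⌋`, and `40 * N + 27` is a sum of three squares
because it is `3` modulo `8`.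

For such an `n`, Dirichlet's theorem and quadratic reciprocity give a positive definite integral
ternary form of determinant `1` that represents `n`. By Hermite's inequality a positive definite
integral form of determinant `1` in at most five variables represents `1`; splitting off the
corresponding vector shows inductively that the form is equivalent to a sum of squares.
-/

section Condensation

open Matrix

variable {R : Type*} [CommRing R] {n : ℕ} {M : Matrix (Fin (n + 1)) (Fin (n + 1)) R}

/-- Chio's pivotal condensation of `M` along its top left entry. It is `M 0 0` times the Schur
complement of that entry, which makes sense without division: when `M` is the Gram matrix of a
lattice basis, this is, up to scaling, the Gram matrix of the projections orthogonal to the first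
basis vector. -/
def chioCondensation (M : Matrix (Fin (n + 1)) (Fin (n + 1)) R) : Matrix (Fin n) (Fin n) R :=
  of fun i j ↦ M 0 0 * M i.succ j.succ - M i.succ 0 * M 0 j.succ

theorem pow_mul_det_eq_mul_det_chioCondensation (M : Matrix (Fin (n + 1)) (Fin (n + 1)) R) :
    M 0 0 ^ n * M.det = M 0 0 * (chioCondensation M).det := by
  let scaled : Matrix (Fin (n + 1)) (Fin (n + 1)) R :=
    of fun i j ↦ vecCons 1 (fun _ ↦ M 0 0) i * M i j
  let cleared : Matrix (Fin (n + 1)) (Fin (n + 1)) R :=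
    of (vecCons (M 0) fun i ↦ vecCons 0 (chioCondensation M i))
  have det_cleared : cleared.det = scaled.det := by
    refine det_eq_of_forall_row_eq_smul_add_const (vecCons 0 fun i ↦ -M i.succ 0) 0 rfl ?_
    intro i j
    cases i using Fin.cases <;> cases j using Fin.cases <;>
      simp [scaled, cleared, chioCondensation, mul_comm, sub_eq_add_neg]
  have hminor : cleared.submatrix (Fin.succAbove 0) Fin.succ = chioCondensation M := by
    ext i j
    simp [cleared]
  calc M 0 0 ^ n * M.det = scaled.det := by
        simp [scaled, det_mul_column, Fin.prod_univ_succ]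
    _ = cleared.det := det_cleared.symm
    _ = M 0 0 * (chioCondensation M).det := by
        rw [det_succ_column_zero, Fin.sum_univ_succ, hminor]
        simp [cleared]

theorem det_chioCondensation [IsDomain R] {M : Matrix (Fin (n + 2)) (Fin (n + 2)) R}
    (h00 : M 0 0 ≠ 0) : (chioCondensation M).det = M 0 0 ^ n * M.det := by
  refine mul_left_cancel₀ h00 ?_
  rw [← pow_mul_det_eq_mul_det_chioCondensation, pow_succ', mul_assoc]

theorem mul_dotProduct_mulVec_eq_add_chioCondensation (M : Matrix (Fin (n + 1)) (Fin (n + 1)) R)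
    (x y : Fin (n + 1) → R) :
    M 0 0 * (x ⬝ᵥ M *ᵥ y) =
      (x ⬝ᵥ M.col 0) * (M 0 ⬝ᵥ y) + vecTail x ⬝ᵥ chioCondensation M *ᵥ vecTail y := by
  have hM : M 0 0 • M = vecMulVec (M.col 0) (M 0) +
      of (vecCons 0 fun i ↦ vecCons 0 (chioCondensation M i)) := by
    ext i j
    cases i using Fin.cases <;> cases j using Fin.cases <;>
      simp [chioCondensation, vecMulVec_apply, mul_comm]
  calc M 0 0 * (x ⬝ᵥ M *ᵥ y) = x ⬝ᵥ (M 0 0 • M) *ᵥ y := by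
        rw [smul_mulVec, dotProduct_smul, smul_eq_mul]
    _ = (x ⬝ᵥ M.col 0) * (M 0 ⬝ᵥ y) + vecTail x ⬝ᵥ chioCondensation M *ᵥ vecTail y := by
        rw [hM, add_mulVec, dotProduct_add, vecMulVec_mulVec, dotProduct_smul, op_smul_eq_mul]
        simp [dotProduct, Fin.sum_univ_succ, mulVec, vecTail]

theorem mul_dotProduct_mulVec_self_eq_add_chioCondensation (hM : M.IsSymm)
    (x : Fin (n + 1) → R) :
    M 0 0 * (x ⬝ᵥ M *ᵥ x) =
      (M 0 ⬝ᵥ x) ^ 2 + vecTail x ⬝ᵥ chioCondensation M *ᵥ vecTail x := by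
  rw [mul_dotProduct_mulVec_eq_add_chioCondensation, show M.col 0 = M 0 from congr_fun hM 0,
    dotProduct_comm x, sq]

theorem isSymm_chioCondensation (hM : M.IsSymm) : (chioCondensation M).IsSymm := by
  ext i j
  simp [chioCondensation, hM.apply i.succ j.succ, hM.apply 0, mul_comm]

theorem exists_eq_transpose_mul_self_of_chioCondensation (hM : M.IsSymm) (h00 : M 0 0 = 1)
    {W : Matrix (Fin n) (Fin n) R} (hW : chioCondensation M = Wᵀ * W) :
    ∃ V : Matrix (Fin (n + 1)) (Fin (n + 1)) R, M = Vᵀ * V := by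
  refine ⟨of (vecCons (M 0) fun i ↦ vecCons 0 (W i)), ?_⟩
  have hsucc (i j : Fin n) :
      M i.succ j.succ = M 0 i.succ * M 0 j.succ + ∑ k, W k i * W k j := by
    have := congr_fun₂ hW i j
    simp only [chioCondensation, of_apply, mul_apply, transpose_apply, h00,
      hM.apply 0 i.succ] at this
    linear_combination this
  ext i j
  cases i using Fin.cases <;> cases j using Fin.cases <;>
    simp [mul_apply, Fin.sum_univ_succ, h00, hsucc, hM.apply 0]

end Condensation

section PosDef

open Matrix

variable {R : Type*} [CommRing R] [LinearOrder R] [IsStrictOrderedRing R] [StarRing R]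
  [TrivialStar R] {n : ℕ} {M : Matrix (Fin (n + 1)) (Fin (n + 1)) R}

theorem posDef_chioCondensation (hM : M.PosDef) : (chioCondensation M).PosDef := by
  have hsymm : M.IsSymm := by simpa using hM.isHermitian
  refine .of_dotProduct_mulVec_pos (by simpa using isSymm_chioCondensation hsymm) fun y hy ↦ ?_
  have h00 : 0 < M 0 0 := hM.diag_pos
  let x := vecCons (-(vecTail (M 0) ⬝ᵥ y)) (M 0 0 • y)
  have hx : x ≠ 0 := fun h ↦ hy <| funext fun i ↦ by
    simpa [x, h00.ne'] using congr_fun h i.succ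
  have hrow : M 0 ⬝ᵥ x = 0 := by simp [x, vecHead]
  have hxy : x ⬝ᵥ M *ᵥ x = M 0 0 * (y ⬝ᵥ chioCondensation M *ᵥ y) := by
    refine mul_left_cancel₀ h00.ne' ?_
    rw [mul_dotProduct_mulVec_self_eq_add_chioCondensation hsymm, hrow]
    simp [x, mulVec_smul]
  have hpos := hM.dotProduct_mulVec_pos hx
  rw [star_trivial, hxy] at hpos
  simpa using pos_of_mul_pos_right hpos h00.le

theorem posDef_of_posDef_chioCondensation (hM : M.IsSymm) (h00 : 0 < M 0 0)
    (hcond : (chioCondensation M).PosDef) : M.PosDef := by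
  refine .of_dotProduct_mulVec_pos (by simpa using hM) fun x hx ↦ ?_
  refine pos_of_mul_pos_right (a := M 0 0) ?_ h00.le
  rw [star_trivial, mul_dotProduct_mulVec_self_eq_add_chioCondensation hM]
  by_cases htail : vecTail x = 0
  · have hrow : M 0 ⬝ᵥ x = M 0 0 * x 0 := by
      rw [dotProduct, Fin.sum_univ_succ, add_eq_left]
      exact Finset.sum_eq_zero fun i _ ↦ by rw [show x i.succ = 0 from congr_fun htail i, mul_zero]
    have hx0 : x 0 ≠ 0 := fun h ↦ hx <| funext (Fin.cases h (congr_fun htail))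
    rw [hrow, htail, zero_dotProduct, add_zero]
    exact sq_pos_of_ne_zero (mul_ne_zero h00.ne' hx0)
  · exact add_pos_of_nonneg_of_pos (sq_nonneg _) (by simpa using hcond.dotProduct_mulVec_pos htail)

theorem posDef_fin_three_of_leading_minors_pos {M : Matrix (Fin 3) (Fin 3) R} (hM : M.IsSymm)
    (h₁ : 0 < M 0 0) (h₂ : 0 < M 0 0 * M 1 1 - M 1 0 * M 0 1) (h₃ : 0 < M.det) : M.PosDef := by
  have hcond := isSymm_chioCondensation hM
  refine posDef_of_posDef_chioCondensation hM h₁ <|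
    posDef_of_posDef_chioCondensation hcond h₂ <|
    posDef_of_posDef_chioCondensation (isSymm_chioCondensation hcond) ?_ ?_
  · have hpivot : chioCondensation (chioCondensation M) 0 0 = M 0 0 * M.det := by
      rw [det_fin_three]
      simp only [chioCondensation, of_apply, Fin.succ_zero_eq_one, Fin.succ_one_eq_two]
      ring
    rw [hpivot]
    exact mul_pos h₁ h₃
  · exact .of_dotProduct_mulVec_pos (Subsingleton.elim _ _) fun x hx ↦
      absurd (Subsingleton.elim x 0) hx

end PosDef

section ChangeOfBasis

open Matrix

variable {R : Type*} [CommRing R]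

theorem dotProduct_transpose_mul_mul_mulVec {m n : Type*} [Fintype m] [Fintype n]
    (M : Matrix m m R) (U : Matrix m n R) (x y : n → R) :
    x ⬝ᵥ (Uᵀ * M * U) *ᵥ y = (U *ᵥ x) ⬝ᵥ M *ᵥ (U *ᵥ y) := by
  rw [← mulVec_mulVec, ← mulVec_mulVec, dotProduct_mulVec, vecMul_transpose]

theorem transpose_mul_mul_apply {m n : Type*} [Fintype m]
    (M : Matrix m m R) (U : Matrix m n R) (i j : n) :
    (Uᵀ * M * U) i j = U.col i ⬝ᵥ M *ᵥ U.col j := by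
  rw [Matrix.mul_assoc]; rfl

theorem mulVec_ne_zero_of_isUnit_det {ι : Type*} [Fintype ι] [DecidableEq ι] {U : Matrix ι ι R}
    (hU : IsUnit U.det) {x : ι → R} (hx : x ≠ 0) : U *ᵥ x ≠ 0 := by
  simpa using (mulVec_injective_of_isUnit (U.isUnit_iff_isUnit_det.2 hU)).ne hx

theorem exists_eq_dotProduct_smul [IsPrincipalIdealRing R] {ι : Type*} [Fintype ι] (x : ι → R) :
    ∃ w y : ι → R, x = (w ⬝ᵥ x) • y := by
  let I := Ideal.span (Set.range x)
  obtain ⟨w, hw⟩ := Ideal.mem_span_range_iff_exists_fun.1 (Submodule.IsPrincipal.generator_mem I)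
  have hdvd (i : ι) : Submodule.IsPrincipal.generator I ∣ x i :=
    (Submodule.IsPrincipal.mem_iff_generator_dvd I).1 (Ideal.subset_span ⟨i, rfl⟩)
  choose y hy using hdvd
  exact ⟨w, y, funext fun i ↦ by rw [dotProduct, hw]; exact hy i⟩

-- The kernel of `w ⬝ᵥ ·` is free of rank `n`, and `x` completes any basis of it.
theorem exists_isUnit_det_col_zero_eq [IsDomain R] [IsPrincipalIdealRing R] {n : ℕ}
    {w x : Fin (n + 1) → R} (hwx : w ⬝ᵥ x = 1) :
    ∃ U : Matrix (Fin (n + 1)) (Fin (n + 1)) R, IsUnit U.det ∧ U.col 0 = x := by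
  let φ : (Fin (n + 1) → R) →ₗ[R] R := dotProductBilin R R w
  have hφ : φ x = 1 := hwx
  have hrank : Module.finrank R (LinearMap.ker φ) = n := by
    have hsurj : Function.Surjective φ := fun r ↦ ⟨r • x, by simp [hφ]⟩
    have hadd := (LinearMap.ker φ).finrank_quotient_add_finrank
    rw [(φ.quotKerEquivOfSurjective hsurj).finrank_eq, Module.finrank_self,
      Module.finrank_fin_fun] at hadd
    omega
  let kerBasis := Module.finBasisOfFinrankEq R (LinearMap.ker φ) hrank
  let basis := Module.Basis.mkFinCons x kerBasis
    (fun r z hz h ↦ by simpa [hφ, LinearMap.mem_ker.1 hz] using congr_arg φ h)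
    (fun z ↦ ⟨-φ z, by simp [hφ]⟩)
  refine ⟨(Pi.basisFun R (Fin (n + 1))).toMatrix basis, ?_, ?_⟩
  · rw [← Module.Basis.det_apply]
    exact Module.Basis.isUnit_det _ basis
  · ext i
    simp [basis, Module.Basis.toMatrix_apply]

end ChangeOfBasis

section IntegralForms

open Matrix

variable {ι : Type*} [Fintype ι] {n : ℕ}

theorem det_transpose_mul_mul_of_isUnit [DecidableEq ι] (M : Matrix ι ι ℤ) {U : Matrix ι ι ℤ}
    (hU : IsUnit U.det) : (Uᵀ * M * U).det = M.det := by
  rw [det_mul, det_mul, det_transpose, mul_right_comm, Int.isUnit_mul_self hU, one_mul]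

theorem posDef_transpose_mul_mul [DecidableEq ι] {M U : Matrix ι ι ℤ} (hM : M.PosDef)
    (hU : IsUnit U.det) : (Uᵀ * M * U).PosDef := by
  simpa using hM.conjTranspose_mul_mul_same
    (mulVec_injective_of_isUnit (U.isUnit_iff_isUnit_det.2 hU))

theorem exists_dotProduct_eq_one_and_minimal [Nonempty ι] {M : Matrix ι ι ℤ} (hM : M.PosDef) :
    ∃ w x : ι → ℤ, w ⬝ᵥ x = 1 ∧ ∀ z ≠ 0, x ⬝ᵥ M *ᵥ x ≤ z ⬝ᵥ M *ᵥ z := by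
  have hpos {z : ι → ℤ} (hz : z ≠ 0) : 0 < z ⬝ᵥ M *ᵥ z := by
    simpa using hM.dotProduct_mulVec_pos hz
  obtain ⟨x, hx, hmin⟩ := (measure fun z : ι → ℤ ↦ (z ⬝ᵥ M *ᵥ z).toNat).wf.has_min
    {z | z ≠ 0} ⟨1, one_ne_zero⟩
  obtain ⟨w, y, hxy⟩ := exists_eq_dotProduct_smul x
  have hg : w ⬝ᵥ x ≠ 0 := fun h ↦ hx (by rw [hxy, h, zero_smul])
  have hy : y ≠ 0 := fun h ↦ hx (by rw [hxy, h, smul_zero])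
  refine ⟨w, y, mul_left_cancel₀ hg ?_, fun z hz ↦ ?_⟩
  · rw [← smul_eq_mul, ← dotProduct_smul, ← hxy, mul_one]
  · calc y ⬝ᵥ M *ᵥ y ≤ (w ⬝ᵥ x) ^ 2 * (y ⬝ᵥ M *ᵥ y) :=
          le_mul_of_one_le_left (hpos hy).le (Int.add_one_le_of_lt (sq_pos_of_ne_zero hg))
      _ = ((w ⬝ᵥ x) • y) ⬝ᵥ M *ᵥ ((w ⬝ᵥ x) • y) := by
          rw [mulVec_smul, dotProduct_smul, smul_dotProduct, smul_eq_mul, smul_eq_mul, sq,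
            mul_assoc]
      _ = x ⬝ᵥ M *ᵥ x := by rw [← hxy]
      _ ≤ z ⬝ᵥ M *ᵥ z := not_lt.1 (mt (Int.toNat_lt_toNat (hpos hx)).2 (hmin z hz))

theorem exists_isUnit_det_forall_apply_zero_zero_le {M : Matrix (Fin (n + 1)) (Fin (n + 1)) ℤ}
    (hM : M.PosDef) : ∃ U : Matrix (Fin (n + 1)) (Fin (n + 1)) ℤ, IsUnit U.det ∧
      ∀ z ≠ 0, (Uᵀ * M * U) 0 0 ≤ z ⬝ᵥ (Uᵀ * M * U) *ᵥ z := by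
  obtain ⟨w, x, hwx, hmin⟩ := exists_dotProduct_eq_one_and_minimal hM
  obtain ⟨U, hU, rfl⟩ := exists_isUnit_det_col_zero_eq hwx
  refine ⟨U, hU, fun z hz ↦ ?_⟩
  rw [transpose_mul_mul_apply, dotProduct_transpose_mul_mul_mulVec]
  exact hmin _ (mulVec_ne_zero_of_isUnit_det hU hz)

theorem exists_abs_two_mul_mul_add_le {a : ℤ} (ha : a ≠ 0) (b : ℤ) :
    ∃ t : ℤ, |2 * (a * t + b)| ≤ |a| := by
  obtain ⟨t, ht⟩ : a ∣ b.bmod a.natAbs - b := Int.natAbs_dvd.1 Int.dvd_bmod_sub_self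
  have hlower := Int.le_bmod (x := b) (Int.natAbs_pos.2 ha)
  have hupper := Int.bmod_lt (x := b) (Int.natAbs_pos.2 ha)
  refine ⟨t, ?_⟩
  rw [← ht, sub_add_cancel, Int.abs_eq_natAbs a, abs_le]
  omega

-- A vector with tail `v` can be chosen so that its component along the first basis vector is at
-- most half of that basis vector.
theorem three_mul_sq_le_four_mul_chioCondensation {M : Matrix (Fin (n + 1)) (Fin (n + 1)) ℤ}
    (hM : M.PosDef) (hmin : ∀ z ≠ 0, M 0 0 ≤ z ⬝ᵥ M *ᵥ z) {v : Fin n → ℤ} (hv : v ≠ 0) :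
    3 * M 0 0 ^ 2 ≤ 4 * (v ⬝ᵥ chioCondensation M *ᵥ v) := by
  have hsymm : M.IsSymm := by simpa using hM.isHermitian
  have h00 : 0 < M 0 0 := hM.diag_pos
  obtain ⟨t, ht⟩ := exists_abs_two_mul_mul_add_le h00.ne' (vecTail (M 0) ⬝ᵥ v)
  have hz : vecCons t v ≠ 0 := fun h ↦ hv (by simpa using congr_arg vecTail h)
  have hdecomp := mul_dotProduct_mulVec_self_eq_add_chioCondensation hsymm (vecCons t v)
  rw [dotProduct_cons, tail_cons, vecHead] at hdecomp
  have hle := mul_le_mul_of_nonneg_left (hmin _ hz) h00.le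
  linarith [sq_le_sq.2 ht, sq (M 0 0)]

/-- Hermite's bound `(4 / 3) ^ ((m - 1) / 2) * det ^ (1 / m)` for the minimum of a form in
`m = n + 1` variables, raised to the power `m` and with denominators cleared. -/
theorem hermite_inequality : ∀ {n : ℕ} {M : Matrix (Fin (n + 1)) (Fin (n + 1)) ℤ}, M.PosDef →
    ∃ x ≠ 0, 3 ^ (n + 1).choose 2 * (x ⬝ᵥ M *ᵥ x) ^ (n + 1) ≤ 4 ^ (n + 1).choose 2 * M.det
  | 0, M, _ => ⟨1, one_ne_zero, by simp [mulVec, dotProduct]⟩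
  | n + 1, M, hM => by
    obtain ⟨U, hU, hmin⟩ := exists_isUnit_det_forall_apply_zero_zero_le hM
    have hcol : U.col 0 ≠ 0 := by
      simpa using mulVec_ne_zero_of_isUnit_det hU (x := Pi.single 0 1) (by simp)
    refine ⟨U.col 0, hcol, ?_⟩
    rw [← transpose_mul_mul_apply, ← det_transpose_mul_mul_of_isUnit M hU]
    have hN := posDef_transpose_mul_mul hM hU
    generalize Uᵀ * M * U = N at hmin hN ⊢
    have hpos : 0 < N 0 0 := hN.diag_pos
    obtain ⟨v, hv, hermite⟩ := hermite_inequality (posDef_chioCondensation hN)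
    rw [det_chioCondensation hpos.ne'] at hermite
    have hbound := three_mul_sq_le_four_mul_chioCondensation hN hmin hv
    have hchoose : (n + 2).choose 2 = (n + 1).choose 2 + (n + 1) := by
      rw [Nat.choose_succ_succ' (n + 1) 1, Nat.choose_one_right, add_comm]
    rw [hchoose]
    set c := (n + 1).choose 2
    set s := v ⬝ᵥ chioCondensation N *ᵥ v
    refine le_of_mul_le_mul_left ?_ (pow_pos hpos n)
    calc N 0 0 ^ n * (3 ^ (c + (n + 1)) * N 0 0 ^ (n + 2))
        = 3 ^ c * (3 * N 0 0 ^ 2) ^ (n + 1) := by ring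
      _ ≤ 3 ^ c * (4 * s) ^ (n + 1) := by gcongr
      _ = 4 ^ (n + 1) * (3 ^ c * s ^ (n + 1)) := by ring
      _ ≤ 4 ^ (n + 1) * (4 ^ c * (N 0 0 ^ n * N.det)) := by gcongr
      _ = N 0 0 ^ n * (4 ^ (c + (n + 1)) * N.det) := by ring

theorem exists_dotProduct_mulVec_self_eq_one (hn : n < 5)
    {M : Matrix (Fin (n + 1)) (Fin (n + 1)) ℤ} (hM : M.PosDef) (hdet : M.det = 1) :
    ∃ x, x ⬝ᵥ M *ᵥ x = 1 := by
  obtain ⟨x, hx, hermite⟩ := hermite_inequality hM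
  have hpos : 0 < x ⬝ᵥ M *ᵥ x := by simpa using hM.dotProduct_mulVec_pos hx
  refine ⟨x, ?_⟩
  by_contra hne
  have htwo : 2 ≤ x ⬝ᵥ M *ᵥ x := by omega
  have hpow : (3 : ℤ) ^ (n + 1).choose 2 * 2 ^ (n + 1) ≤ 4 ^ (n + 1).choose 2 :=
    calc (3 : ℤ) ^ (n + 1).choose 2 * 2 ^ (n + 1)
        ≤ 3 ^ (n + 1).choose 2 * (x ⬝ᵥ M *ᵥ x) ^ (n + 1) := by gcongr
      _ ≤ 4 ^ (n + 1).choose 2 := by rwa [hdet, mul_one] at hermite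
  interval_cases n <;> norm_num [Nat.choose] at hpow

theorem exists_eq_transpose_mul_self_of_posDef_of_det_eq_one :
    ∀ {n : ℕ}, n ≤ 5 → ∀ {M : Matrix (Fin n) (Fin n) ℤ}, M.PosDef → M.det = 1 →
      ∃ V : Matrix (Fin n) (Fin n) ℤ, M = Vᵀ * V
  | 0, _, _, _, _ => ⟨0, Subsingleton.elim _ _⟩
  | n + 1, hn, M, hM, hdet => by
    obtain ⟨x, hx⟩ := exists_dotProduct_mulVec_self_eq_one hn hM hdet
    obtain ⟨U, hU, rfl⟩ := exists_isUnit_det_col_zero_eq ((dotProduct_comm _ _).trans hx)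
    set N := Uᵀ * M * U with hN
    have hNpos : N.PosDef := posDef_transpose_mul_mul hM hU
    have h00 : N 0 0 = 1 := by rw [hN, transpose_mul_mul_apply, hx]
    have hcond : (chioCondensation N).det = 1 := by
      have hchio := pow_mul_det_eq_mul_det_chioCondensation N
      rwa [h00, one_pow, one_mul, one_mul, hN, det_transpose_mul_mul_of_isUnit M hU, hdet,
        eq_comm] at hchio
    obtain ⟨W, hW⟩ := exists_eq_transpose_mul_self_of_posDef_of_det_eq_one (by omega)
      (posDef_chioCondensation hNpos) hcond
    obtain ⟨V, hV⟩ := exists_eq_transpose_mul_self_of_chioCondensation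
      (by simpa using hNpos.isHermitian) h00 hW
    refine ⟨V * U⁻¹, ?_⟩
    calc M = (U * U⁻¹)ᵀ * M * (U * U⁻¹) := by simp [mul_nonsing_inv _ hU]
      _ = U⁻¹ᵀ * N * U⁻¹ := by simp only [hN, transpose_mul, Matrix.mul_assoc]
      _ = (V * U⁻¹)ᵀ * (V * U⁻¹) := by simp only [hV, transpose_mul, Matrix.mul_assoc]

end IntegralForms

section ThreeSquares

open NumberTheorySymbols in
theorem isSquare_neg_intCast_zmod {p b : ℕ} [Fact p.Prime] (hp : p % 4 = 1) (hb : b % 8 = 1)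
    (hdvd : b ∣ 2 * p + 1) : IsSquare ((-b : ℤ) : ZMod p) := by
  have hbodd : Odd b := Nat.odd_iff.2 (by omega)
  have hpodd : Odd p := Nat.odd_iff.2 (by omega)
  have h2b : J(2 | b) = 1 := by rw [jacobiSym.at_two hbodd, ZMod.χ₈_nat_mod_eight, hb]; rfl
  have hneg1 : J(-1 | b) = 1 := by
    rw [jacobiSym.at_neg_one hbodd, ZMod.χ₄_nat_one_mod_four (by omega)]
  have h2p : (2 * p : ℤ) ≡ -1 [ZMOD b] := by
    refine (Int.modEq_iff_dvd.2 ?_).symm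
    rw [sub_neg_eq_add]
    exact_mod_cast hdvd
  have hpb : J(p | b) = 1 :=
    calc J(p | b) = J(2 | b) * J(p | b) := by rw [h2b, one_mul]
      _ = J(2 * p | b) := (jacobiSym.mul_left ..).symm
      _ = J(-1 | b) := jacobiSym.mod_left' h2p
      _ = 1 := hneg1
  have hbp : legendreSym p (-b) = 1 := by
    rw [jacobiSym.legendreSym.to_jacobiSym, jacobiSym.neg _ hpodd, ZMod.χ₄_nat_one_mod_four hp,
      one_mul, ← jacobiSym.quadratic_reciprocity_one_mod_four hp hbodd, hpb]
  refine (legendreSym.eq_one_iff p fun h ↦ ?_).1 hbp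
  simp [(legendreSym.eq_zero_iff p _).2 h] at hbp

theorem exists_two_mul_dvd_sq_add_s7 {m : ℕ} (hm : Odd m) {b : ℤ}
    (hb : IsSquare ((-b : ℤ) : ZMod m)) : ∃ s : ℤ, 2 * (m : ℤ) ∣ s ^ 2 + b := by
  obtain ⟨r, hr⟩ := hb
  obtain ⟨s, rfl⟩ := ZMod.intCast_surjective r
  have hcop : IsCoprime (2 : ℤ) m := by
    exact_mod_cast Nat.isCoprime_iff_coprime.2 (Nat.coprime_two_left.2 hm)
  -- This has the parity of `b` and the same residue as `s` modulo `m`.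
  refine ⟨s + m * (s + b), hcop.mul_dvd ?_ ?_⟩
  · have hmodd : ¬ Even (m : ℤ) := by simpa using hm
    rw [← even_iff_two_dvd]
    simp only [Int.even_add, Int.even_mul, Int.even_pow, hmodd]
    tauto
  · rw [← ZMod.intCast_zmod_eq_zero_iff_dvd]
    push_cast at hr ⊢
    rw [ZMod.natCast_self, zero_mul, add_zero, sq, ← hr, neg_add_cancel]

theorem exists_prime_two_mul_add_one_eq_mul {n : ℕ} (hn : n % 8 = 3) :
    ∃ p b : ℕ, p.Prime ∧ p % 4 = 1 ∧ b % 8 = 1 ∧ 2 * p + 1 = b * n := by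
  obtain ⟨k, rfl⟩ : ∃ k, n = 8 * k + 3 := ⟨n / 8, by omega⟩
  have hcop : Nat.Coprime (4 * k + 1) (4 * (8 * k + 3)) := by
    refine .mul_right (by simp) ?_
    rw [show 8 * k + 3 = 1 + 2 * (4 * k + 1) by ring]
    simp
  obtain ⟨p, hlt, hp, hmod⟩ := Nat.forall_exists_prime_gt_and_modEq (4 * k + 1) (by omega) hcop
  obtain ⟨v, hv⟩ := (Nat.modEq_iff_dvd' hlt.le).1 hmod.symm
  have hpv : p = 4 * ((8 * k + 3) * v) + (4 * k + 1) := by rw [← mul_assoc]; omega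
  exact ⟨p, 8 * v + 1, hp, by omega, by omega, by rw [hpv]; ring⟩

theorem exists_eq_sq_add_sq_add_sq {n : ℕ} (hn : n % 8 = 3) :
    ∃ a b c : ℕ, n = a ^ 2 + b ^ 2 + c ^ 2 := by
  obtain ⟨p, b, hp, hp4, hb8, hpb⟩ := exists_prime_two_mul_add_one_eq_mul hn
  have : Fact p.Prime := ⟨hp⟩
  obtain ⟨s, g, hg⟩ := exists_two_mul_dvd_sq_add_s7 (Nat.odd_iff.2 (by omega))
    (isSquare_neg_intCast_zmod hp4 hb8 ⟨n, hpb⟩)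
  let M : Matrix (Fin 3) (Fin 3) ℤ := !![2 * p, s, 0; s, g, 1; 0, 1, n]
  have hdet : M.det = 1 := by
    zify at hpb
    simp only [M, Matrix.det_fin_three, Matrix.of_apply, Matrix.cons_val]
    linear_combination -(n : ℤ) * hg - hpb
  have hminor : 0 < 2 * p * g - s * s := by
    have : (0 : ℤ) < b := by omega
    linarith
  have hM : M.PosDef := by
    refine posDef_fin_three_of_leading_minors_pos ?_ ?_ hminor (hdet ▸ one_pos)
    · ext i j
      fin_cases i <;> fin_cases j <;> rfl
    · simpa [M] using hp.pos
  obtain ⟨V, hV⟩ := exists_eq_transpose_mul_self_of_posDef_of_det_eq_one (by norm_num) hM hdet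
  refine ⟨(V 0 2).natAbs, (V 1 2).natAbs, (V 2 2).natAbs, ?_⟩
  zify
  simpa [M, Matrix.mul_apply, Fin.sum_univ_three, ← sq] using congr_fun₂ hV 2 2

end ThreeSquares

theorem sq_mod_forty_add_eq_of_add_mod_eq {a b c : ℕ}
    (h : (a ^ 2 + b ^ 2 + c ^ 2) % 40 = 27) : a ^ 2 % 40 + b ^ 2 % 40 + c ^ 2 % 40 = 27 := by
  let residues : Finset ℕ := (Finset.range 40).image (· ^ 2 % 40)
  have hmem (x : ℕ) : x ^ 2 % 40 ∈ residues :=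
    Finset.mem_image.2 ⟨x % 40, Finset.mem_range.2 (Nat.mod_lt x (by norm_num)),
      (Nat.pow_mod x 2 40).symm⟩
  have hsum : ∀ x ∈ residues, ∀ y ∈ residues, ∀ z ∈ residues,
      (x + y + z) % 40 = 27 → x + y + z = 27 := by decide
  exact hsum _ (hmem a) _ (hmem b) _ (hmem c) (by omega)

theorem stmt_7 (N : ℕ) :
    ∃ A B C : ℕ, N = A ^ 2 / 40 + B ^ 2 / 40 + C ^ 2 / 40 := by
  obtain ⟨A, B, C, h⟩ := exists_eq_sq_add_sq_add_sq (n := 40 * N + 27) (by omega)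
  have hres : A ^ 2 % 40 + B ^ 2 % 40 + C ^ 2 % 40 = 27 :=
    sq_mod_forty_add_eq_of_add_mod_eq (by omega)
  exact ⟨A, B, C, by omega⟩
end
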